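/- Let Δt > 0, λ > 0, and τ > 0. Let M_L⁻, M_L⁺, M_R⁻, M_R⁺ ∈ ℝ⁵ each be of three-point HyQMOM form with ρ₁, ρ₂, ρ₃ > 0 and v₁ < v₂ < v₃ (each state with its own parameters), with interface speeds δ_L±, δ_R± and HLL fluxes F̂_L, F̂_R as in the HLL construction, and cell average M̄ = ½(M_L⁺ + M_R⁻). Set ρ = M̄₀, U = M̄₁/M̄₀, θ = M̄₂/M̄₀ − U² (note that θ > 0 holds automatically here), and let G = ρ·(1, U, U² + θ, U³ + 3Uθ, U⁴ + 6U²θ + 3θ²) be the Maxwellian moment vector. Define the semi-implicit update M_new by (1 + Δt/τ) M_new = M̄ − λ(F̂_R − F̂_L) + (Δt/τ) G. If λ(δ_L⁺ − δ_L⁻) ≤ ½ and λ(δ_R⁺ − δ_R⁻) ≤ ½, then H₂(M_new) is positive definite. -/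

import Mathlib

/-- The `3×3` Hankel matrix `H₂(c)` of a vector `c ∈ ℝ⁵`, with `(j,k)` entry `c_{j+k}`. -/
noncomputable def hankel2 (c : Fin 5 → ℝ) : Matrix (Fin 3) (Fin 3) ℝ :=
  Matrix.of fun j k => c ⟨j.1 + k.1, by have := j.isLt; have := k.isLt; omega⟩

/-- Parameters of a three-point HyQMOM state: positive weights and ordered abscissas. -/
structure HyqParams where
  r1 : ℝ
  r2 : ℝ
  r3 : ℝ
  v1 : ℝ
  v2 : ℝ
  v3 : ℝ
  hr1 : 0 < r1
  hr2 : 0 < r2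
  hr3 : 0 < r3
  h12 : v1 < v2
  h23 : v2 < v3

/-- Moment vector `M_k = ρ₁v₁^k + ρ₂v₂^k + ρ₃v₃^k`, `k = 0,…,4`. -/
noncomputable def HyqParams.M (W : HyqParams) : Fin 5 → ℝ :=
  fun k => W.r1 * W.v1 ^ k.1 + W.r2 * W.v2 ^ k.1 + W.r3 * W.v3 ^ k.1

/-- Flux vector `F(M) = (M₁,…,M₄,M₅)` with `M₅ = ρ₁v₁⁵ + ρ₂v₂⁵ + ρ₃v₃⁵`. -/
noncomputable def HyqParams.F (W : HyqParams) : Fin 5 → ℝ :=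
  fun k => W.r1 * W.v1 ^ (k.1 + 1) + W.r2 * W.v2 ^ (k.1 + 1) + W.r3 * W.v3 ^ (k.1 + 1)

/-- Wave speed `δ⁺(M) = max{v₁, v₂, v₃, 0}`. -/
noncomputable def HyqParams.dp (W : HyqParams) : ℝ :=
  max (max (max W.v1 W.v2) W.v3) 0

/-- Wave speed `δ⁻(M) = min{v₁, v₂, v₃, 0}`. -/
noncomputable def HyqParams.dm (W : HyqParams) : ℝ :=
  min (min (min W.v1 W.v2) W.v3) 0

/-- HLL numerical flux
`F̂(M⁻,M⁺) = (δ̂⁺F(M⁻) − δ̂⁻F(M⁺) + δ̂⁺δ̂⁻(M⁺ − M⁻))/(δ̂⁺ − δ̂⁻)`. -/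
noncomputable def hllFlux (dp dm : ℝ) (Mm Mp Fm Fp : Fin 5 → ℝ) : Fin 5 → ℝ :=
  fun k => (dp * Fm k - dm * Fp k + dp * dm * (Mp k - Mm k)) / (dp - dm)

/-- Maxwellian moment vector `G = ρ(1, U, U²+θ, U³+3Uθ, U⁴+6U²θ+3θ²)`. -/
noncomputable def maxwellMoments (ρ U θ : ℝ) : Fin 5 → ℝ :=
  ![ρ, ρ * U, ρ * (U ^ 2 + θ), ρ * (U ^ 3 + 3 * U * θ),
    ρ * (U ^ 4 + 6 * U ^ 2 * θ + 3 * θ ^ 2)]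

/-- quadratic form of the Hankel matrix -/
noncomputable def hQ (a b c : ℝ) (m : Fin 5 → ℝ) : ℝ :=
  m 0 * a ^ 2 + m 1 * (2 * a * b) + m 2 * (b ^ 2 + 2 * a * c) + m 3 * (2 * b * c) + m 4 * c ^ 2

theorem hQ_M (a b c : ℝ) (W : HyqParams) : hQ a b c W.M =
    W.r1 * (a + b * W.v1 + c * W.v1 ^ 2) ^ 2 + W.r2 * (a + b * W.v2 + c * W.v2 ^ 2) ^ 2
      + W.r3 * (a + b * W.v3 + c * W.v3 ^ 2) ^ 2 := by
  simp [hQ, HyqParams.M]; ring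

theorem hQ_F (a b c : ℝ) (W : HyqParams) : hQ a b c W.F =
    W.v1 * (W.r1 * (a + b * W.v1 + c * W.v1 ^ 2) ^ 2)
      + W.v2 * (W.r2 * (a + b * W.v2 + c * W.v2 ^ 2) ^ 2)
      + W.v3 * (W.r3 * (a + b * W.v3 + c * W.v3 ^ 2) ^ 2) := by
  simp [hQ, HyqParams.F]; ring

theorem hQ_M_nonneg (a b c : ℝ) (W : HyqParams) : 0 ≤ hQ a b c W.M := by
  rw [hQ_M]
  have := W.hr1; have := W.hr2; have := W.hr3
  positivity

theorem hQ_F_le (a b c d : ℝ) (W : HyqParams) (h : W.dp ≤ d) :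
    hQ a b c W.F ≤ d * hQ a b c W.M := by
  rw [hQ_F, hQ_M, mul_add, mul_add]
  have := W.hr1; have := W.hr2; have := W.hr3
  simp only [HyqParams.dp, max_le_iff] at h
  obtain ⟨⟨⟨h1, h2⟩, h3⟩, h4⟩ := h
  gcongr

theorem le_hQ_F (a b c d : ℝ) (W : HyqParams) (h : d ≤ W.dm) :
    d * hQ a b c W.M ≤ hQ a b c W.F := by
  rw [hQ_F, hQ_M, mul_add, mul_add]
  have := W.hr1; have := W.hr2; have := W.hr3
  simp only [HyqParams.dm, le_min_iff] at h
  obtain ⟨⟨⟨h1, h2⟩, h3⟩, h4⟩ := h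
  gcongr

theorem hQ_flux (a b c p m : ℝ) (Mm Mp Fm Fp : Fin 5 → ℝ) :
    hQ a b c (hllFlux p m Mm Mp Fm Fp) =
      (p * hQ a b c Fm - m * hQ a b c Fp + p * m * (hQ a b c Mp - hQ a b c Mm)) / (p - m) := by
  simp only [hQ, hllFlux]; ring

theorem dp_nonneg (W : HyqParams) : 0 ≤ W.dp := le_max_right _ _

theorem dm_nonpos (W : HyqParams) : W.dm ≤ 0 := min_le_right _ _

theorem dm_lt_dp (W : HyqParams) : W.dm < W.dp := by
  have h1 : W.dm ≤ W.v1 := by simp [HyqParams.dm]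
  have h2 : W.v2 ≤ W.dp := by simp [HyqParams.dp]
  have := W.h12
  linarith

theorem flux_le (a b c p m : ℝ) (A B : HyqParams) (hp : p = max A.dp B.dp)
    (hm : m = min A.dm B.dm) :
    hQ a b c (hllFlux p m A.M B.M A.F B.F) ≤ p * hQ a b c A.M ∧
    m * hQ a b c B.M ≤ hQ a b c (hllFlux p m A.M B.M A.F B.F) ∧ 0 ≤ p ∧ m ≤ 0 := by
  have pA : A.dp ≤ p := hp ▸ le_max_left _ _
  have pB : B.dp ≤ p := hp ▸ le_max_right _ _
  have mA : m ≤ A.dm := hm ▸ min_le_left _ _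
  have mB : m ≤ B.dm := hm ▸ min_le_right _ _
  have p0 := (dp_nonneg A).trans pA
  have m0 := mA.trans (dm_nonpos A)
  have hlt : 0 < p - m := by linarith [dm_lt_dp A]
  have a1 := mul_le_mul_of_nonneg_left (hQ_F_le a b c p A pA) p0
  have a2 := mul_le_mul_of_nonneg_left (le_hQ_F a b c m A mA) p0
  have b1 := mul_le_mul_of_nonpos_left (hQ_F_le a b c p B pB) m0
  have b2 := mul_le_mul_of_nonpos_left (le_hQ_F a b c m B mB) m0
  refine ⟨?_, ?_, p0, m0⟩
  · rw [hQ_flux, div_le_iff₀ hlt]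
    nlinarith
  · rw [hQ_flux, le_div_iff₀ hlt]
    nlinarith

theorem M0_pos (W : HyqParams) : 0 < W.M 0 := by
  have := W.hr1; have := W.hr2; have := W.hr3
  simp [HyqParams.M]; positivity

theorem var_pos (W : HyqParams) (U : ℝ) : 0 < W.M 2 - 2 * U * W.M 1 + U ^ 2 * W.M 0 := by
  have e : W.M 2 - 2 * U * W.M 1 + U ^ 2 * W.M 0 = W.r1 * (W.v1 - U) ^ 2
      + W.r2 * (W.v2 - U) ^ 2 + W.r3 * (W.v3 - U) ^ 2 := by
    simp [HyqParams.M]; ring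
  rw [e]
  have h1 := W.hr1; have h2 := W.hr2; have h3 := W.hr3; have h12 := W.h12
  by_cases h : W.v1 = U
  · have : 0 < W.v2 - U := by linarith
    positivity
  · have : W.v1 - U ≠ 0 := sub_ne_zero.mpr h
    positivity

theorem maxwell_pos (a b c ρ U θ : ℝ) (hρ : 0 < ρ) (hθ : 0 < θ)
    (h : ¬ (a = 0 ∧ b = 0 ∧ c = 0)) : 0 < hQ a b c (maxwellMoments ρ U θ) := by
  have e : hQ a b c (maxwellMoments ρ U θ) = ρ * ((a + b * U + c * U ^ 2 + c * θ) ^ 2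
      + θ * (b + 2 * c * U) ^ 2 + 2 * θ ^ 2 * c ^ 2) := by
    simp [hQ, maxwellMoments]; ring
  rw [e]
  apply mul_pos hρ
  by_cases hc : c = 0
  · subst hc
    by_cases hb : b = 0
    · subst hb
      have ha : a ≠ 0 := fun ha => h ⟨ha, rfl, rfl⟩
      simp; positivity
    · simp; positivity
  · positivity

theorem posDef_of_hQ (m : Fin 5 → ℝ)
    (h : ∀ a b c : ℝ, ¬ (a = 0 ∧ b = 0 ∧ c = 0) → 0 < hQ a b c m) : (hankel2 m).PosDef := by
  apply Matrix.PosDef.of_dotProduct_mulVec_pos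
  · ext i j
    fin_cases i <;> fin_cases j <;> simp [hankel2]
  · intro x hx
    have := h (x 0) (x 1) (x 2) (fun ⟨h0, h1, h2⟩ => hx (by
      ext i; fin_cases i <;> simp [h0, h1, h2]))
    have e : star x ⬝ᵥ (hankel2 m).mulVec x = hQ (x 0) (x 1) (x 2) m := by
      simp [hQ, hankel2, dotProduct, Matrix.mulVec, Fin.sum_univ_three]
      ring
    rw [e]; exact this

/-- realizability of the semi-implicit BGK HLL finite-volume update for the
three-point HyQMOM closure.  With `M̄ = ½(M_L⁺ + M_R⁻)`, `ρ = M̄₀`, `U = M̄₁/M̄₀`,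
`θ = M̄₂/M̄₀ − U²`, `G` the Maxwellian moment vector, and `M_new` the solution of
`(1 + Δt/τ)M_new = M̄ − λ(F̂_R − F̂_L) + (Δt/τ)G`, the CFL conditions `λ(δ⁺ − δ⁻) ≤ 1/2`
at both interfaces imply that `H₂(M_new)` is positive definite. -/
theorem hyqmom_hll_bgk_semiImplicit_posDef (Δt lam τ : ℝ)
    (hΔt : 0 < Δt) (hlam : 0 < lam) (hτ : 0 < τ)
    (WLm WLp WRm WRp : HyqParams)
    (dLp dLm dRp dRm : ℝ)
    (hdLp : dLp = max WLm.dp WLp.dp)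
    (hdLm : dLm = min WLm.dm WLp.dm)
    (hdRp : dRp = max WRm.dp WRp.dp)
    (hdRm : dRm = min WRm.dm WRp.dm)
    (FL FR : Fin 5 → ℝ)
    (hFL : FL = hllFlux dLp dLm WLm.M WLp.M WLm.F WLp.F)
    (hFR : FR = hllFlux dRp dRm WRm.M WRp.M WRm.F WRp.F)
    (Mbar : Fin 5 → ℝ) (hMbar : ∀ k, Mbar k = (WLp.M k + WRm.M k) / 2)
    (G : Fin 5 → ℝ)
    (hG : G = maxwellMoments (Mbar 0) (Mbar 1 / Mbar 0)
        (Mbar 2 / Mbar 0 - (Mbar 1 / Mbar 0) ^ 2))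
    (Mnew : Fin 5 → ℝ)
    (hMnew : ∀ k, (1 + Δt / τ) * Mnew k = Mbar k - lam * (FR k - FL k) + Δt / τ * G k)
    (hCFL_L : lam * (dLp - dLm) ≤ 1 / 2)
    (hCFL_R : lam * (dRp - dRm) ≤ 1 / 2) :
    (hankel2 Mnew).PosDef := by
  apply posDef_of_hQ
  intro a b c habc
  obtain ⟨-, hL, -, mL⟩ := flux_le a b c dLp dLm WLm WLp hdLp hdLm
  obtain ⟨hR, -, pR, -⟩ := flux_le a b c dRp dRm WRm WRp hdRp hdRm
  obtain ⟨-, -, pL, -⟩ := flux_le a b c dLp dLm WLm WLp hdLp hdLm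
  obtain ⟨-, -, -, mR⟩ := flux_le a b c dRp dRm WRm WRp hdRp hdRm
  rw [← hFL] at hL
  rw [← hFR] at hR
  have hρ : 0 < Mbar 0 := by
    rw [hMbar]; linarith [M0_pos WLp, M0_pos WRm]
  have hθ : 0 < Mbar 2 / Mbar 0 - (Mbar 1 / Mbar 0) ^ 2 := by
    have hv : 0 < Mbar 2 - 2 * (Mbar 1 / Mbar 0) * Mbar 1 + (Mbar 1 / Mbar 0) ^ 2 * Mbar 0 := by
      have h1 := var_pos WLp (Mbar 1 / Mbar 0)
      have h2 := var_pos WRm (Mbar 1 / Mbar 0)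
      generalize Mbar 1 / Mbar 0 = U at *
      rw [hMbar 0, hMbar 1, hMbar 2]
      linarith
    have e : Mbar 2 / Mbar 0 - (Mbar 1 / Mbar 0) ^ 2 =
        (Mbar 2 - 2 * (Mbar 1 / Mbar 0) * Mbar 1 + (Mbar 1 / Mbar 0) ^ 2 * Mbar 0) / Mbar 0 := by
      field_simp; ring
    rw [e]; exact div_pos hv hρ
  have hGpos : 0 < hQ a b c G := hG ▸ maxwell_pos a b c _ _ _ hρ hθ habc
  have hk : 0 < Δt / τ := div_pos hΔt hτ
  have hB : hQ a b c Mbar = (hQ a b c WLp.M + hQ a b c WRm.M) / 2 := by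
    simp only [hQ, hMbar]; ring
  have key : (1 + Δt / τ) * hQ a b c Mnew = hQ a b c Mbar
      - lam * (hQ a b c FR - hQ a b c FL) + Δt / τ * hQ a b c G := by
    simp only [hQ]
    linear_combination a ^ 2 * hMnew 0 + (2 * a * b) * hMnew 1 + (b ^ 2 + 2 * a * c) * hMnew 2
      + (2 * b * c) * hMnew 3 + c ^ 2 * hMnew 4
  have l1 : lam * hQ a b c FR ≤ 1 / 2 * hQ a b c WRm.M := by
    calc _ ≤ lam * (dRp * hQ a b c WRm.M) := by gcongr
      _ = (lam * dRp) * hQ a b c WRm.M := by ring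
      _ ≤ _ := mul_le_mul_of_nonneg_right (by nlinarith) (hQ_M_nonneg _ _ _ _)
  have l2 : -(1 / 2) * hQ a b c WLp.M ≤ lam * hQ a b c FL := by
    calc _ ≤ (lam * dLm) * hQ a b c WLp.M :=
          mul_le_mul_of_nonneg_right (by nlinarith) (hQ_M_nonneg _ _ _ _)
      _ = lam * (dLm * hQ a b c WLp.M) := by ring
      _ ≤ _ := by gcongr
  have hpos : 0 < (1 + Δt / τ) * hQ a b c Mnew := by
    rw [key, hB]
    have := mul_pos hk hGpos
    linarith
  exact (pos_iff_pos_of_mul_pos hpos).mp (by linarith)
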